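/- arXiv:2305.09966 — 2 statements merged into one kernel-verified Lean document; each statement's English description precedes it below -/
import Mathlib

section
/- Let A be an AWA and w ∈ Σ^ω with unique sequence R_w = Q₁⁰Q₁¹⋯. Then there exists exactly one sequence d₀d₁⋯ of distance functions d_i : (Q₁ⁱ∩R) ∪ (Acc∖Q₁ⁱ) → ℕ^{>0} such that Φ_w = (Q₁⁰,d₀)(Q₁¹,d₁)⋯ is consistent. -/
/-!
For a rejecting component, the rules R1 determine the sublevel sets of a distance function.
Put `L₀(i) = ∅` and let `L_{k+1}(i)` be the set of rejecting states `p ∈ Q₁ⁱ` whose transition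
formula is satisfied by `(Q₁^{i+1} ∖ C) ∪ (C ∩ L_k(i+1))`, where `C` is the component of `p`
(`lev`). A positive function `d` obeys R1 exactly when `{p | d_i(p) ≤ k} = L_k(i)` for all `k`
and `i` (`mem_lev_iff_of_half`, `half_of_mem_lev_iff`). This gives uniqueness, and it reduces
existence to the claim that every state of the domain lies in some `L_k(i)`. Rule R2 is rule R1
for the dual automaton and the complements of the `Q₁ⁱ`, so the same holds for accepting
components.

For rejecting `p ∈ Q₁ⁱ` (`exists_mem_lev_rej`): if `p` lies in no `L_k(i)`, then, the state space
being finite, any set of successors inside `Q₁^{i+1}` satisfying the transition formula contains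
a state of the component of `p` that lies in no `L_k(i+1)`. In an accepting run DAG from `p` this
produces an ω-branch that never leaves a rejecting component, a contradiction.

For accepting `p ∉ Q₁ⁱ` (`exists_mem_lev_acc`): if `p` lies in no level of the dual automaton, an
accepting run DAG from `p` exists, contrary to `p ∉ Q₁ⁱ`. Its vertices are the states of
`Q₁ʲ` together with the accepting states outside all dual levels; the latter are sent to
`Q₁^{j+1}` or to states of the same kind in their component, and the former to states of
`Q₁^{j+1}`, with strictly decreasing level as long as a rejecting component is not left. By
weakness an ω-branch with finitely many accepting states is eventually trapped in one rejecting
component, where its level would decrease forever. No complementation theorem for weak automata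
is needed.
-/

universe u v

/-- Positive Boolean formulas over `Q` (with constants tt and ff, connectives ∧ and ∨). -/
inductive PosBool (Q : Type u) : Type u
  | tt : PosBool Q
  | ff : PosBool Q
  | var : Q → PosBool Q
  | band : PosBool Q → PosBool Q → PosBool Q
  | bor : PosBool Q → PosBool Q → PosBool Q

namespace PosBool

variable {Q : Type u}

/-- A set `Y` satisfies a positive Boolean formula. -/
def Sat (Y : Set Q) : PosBool Q → Prop
  | .tt => True
  | .ff => False
  | .var q => q ∈ Y
  | .band θ₁ θ₂ => Sat Y θ₁ ∧ Sat Y θ₂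
  | .bor θ₁ θ₂ => Sat Y θ₁ ∨ Sat Y θ₂

/-- The states occurring in a formula. -/
def vars : PosBool Q → Set Q
  | .tt => ∅
  | .ff => ∅
  | .var q => {q}
  | .band θ₁ θ₂ => vars θ₁ ∪ vars θ₂
  | .bor θ₁ θ₂ => vars θ₁ ∪ vars θ₂

/-- The dual formula: exchange tt with ff and ∧ with ∨. -/
def dual : PosBool Q → PosBool Q
  | .tt => .ff
  | .ff => .tt
  | .var q => .var q
  | .band θ₁ θ₂ => .bor (dual θ₁) (dual θ₂)
  | .bor θ₁ θ₂ => .band (dual θ₁) (dual θ₂)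

end PosBool

/-- An alternating Büchi automaton with alphabet `α` and state space `Q`. -/
structure ABA (α : Type v) (Q : Type u) where
  init : Q
  delta : Q → α → PosBool Q
  acc : Set Q

namespace ABA

variable {α : Type v} {Q : Type u}

/-- The automaton `A^q`, i.e. `A` with initial state `q`. -/
def setInit (M : ABA α Q) (q : Q) : ABA α Q := { M with init := q }

/-- Completeness: every transition formula is satisfiable. -/
def Complete (M : ABA α Q) : Prop := ∀ q a, PosBool.Sat (Set.univ : Set Q) (M.delta q a)

/-- Edge of the underlying graph. -/
def edge (M : ABA α Q) (q q' : Q) : Prop := ∃ a, q' ∈ PosBool.vars (M.delta q a)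

/-- Reachability in the underlying graph. -/
def reach (M : ABA α Q) : Q → Q → Prop := Relation.ReflTransGen M.edge

/-- The strongly connected component of a state. -/
def sccOf (M : ABA α Q) (q : Q) : Set Q := {q' | M.reach q q' ∧ M.reach q' q}

/-- `C` is an SCC of the underlying graph. -/
def IsSCC (M : ABA α Q) (C : Set Q) : Prop := ∃ q, C = M.sccOf q

/-- A weak alternating automaton: every SCC is accepting or rejecting. -/
def IsWeak (M : ABA α Q) : Prop := ∀ q : Q, M.sccOf q ⊆ M.acc ∨ M.sccOf q ∩ M.acc = ∅

/-- The dual automaton. -/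
def dual (M : ABA α Q) : ABA α Q where
  init := M.init
  delta := fun q a => (M.delta q a).dual
  acc := M.accᶜ

/-- A run DAG of `M` over the ω-word `w`. -/
structure RunDAG (M : ABA α Q) (w : ℕ → α) where
  V : ℕ → Set Q
  E : ℕ → Q → Q → Prop
  init_mem : M.init ∈ V 0
  edge_src : ∀ ℓ q q', E ℓ q q' → q ∈ V ℓ
  edge_tgt : ∀ ℓ q q', E ℓ q q' → q' ∈ V (ℓ + 1)
  sat : ∀ ℓ q, q ∈ V ℓ → PosBool.Sat {q' | E ℓ q q'} (M.delta q (w ℓ))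

/-- An ω-branch of a run DAG. -/
def RunDAG.IsBranch {M : ABA α Q} {w : ℕ → α} (G : M.RunDAG w) (b : ℕ → Q) : Prop :=
  b 0 = M.init ∧ ∀ ℓ, G.E ℓ (b ℓ) (b (ℓ + 1))

/-- A run DAG is accepting if every ω-branch visits accepting states infinitely often. -/
def RunDAG.Accepting {M : ABA α Q} {w : ℕ → α} (G : M.RunDAG w) : Prop :=
  ∀ b, G.IsBranch b → ∀ n, ∃ m, n ≤ m ∧ b m ∈ M.acc

/-- `M` accepts `w` if there is an accepting run DAG of `M` over `w`. -/
def Accepts (M : ABA α Q) (w : ℕ → α) : Prop := ∃ G : M.RunDAG w, G.Accepting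

/-- The language of `M`. -/
def lang (M : ABA α Q) : Set (ℕ → α) := {w | M.Accepts w}

/-- `R`: the union of the rejecting SCCs. -/
def RejPart (M : ABA α Q) : Set Q := {q | M.sccOf q ∩ M.acc = ∅}

/-- `Acc`: the union of the accepting SCCs. -/
def AccPart (M : ABA α Q) : Set Q := {q | M.sccOf q ⊆ M.acc}

end ABA

/-- The suffix `w[i⋯]` of an ω-word. -/
def suffix {α : Type v} (w : ℕ → α) (i : ℕ) : ℕ → α := fun n => w (i + n)

/-- `Q_w = {s ∈ Q | w ∈ L(A^s)}`. -/
def QSet {α : Type v} {Q : Type u} (M : ABA α Q) (w : ℕ → α) : Set Q :=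
  {s | w ∈ (M.setInit s).lang}

/-- The unique sequence `R_w`, i.e. `i ↦ Q_{w[i⋯]}`. -/
def QSeq {α : Type v} {Q : Type u} (M : ABA α Q) (w : ℕ → α) (i : ℕ) : Set Q :=
  QSet M (suffix w i)

/-- A nondeterministic Büchi automaton. -/
structure NBA (α : Type v) (P : Type u) where
  init : Set P
  delta : P → α → Set P
  acc : Set P

namespace NBA

variable {α : Type v} {P : Type u}

/-- A macrorun of `N` over `w`. -/
def IsMacrorun (N : NBA α P) (w : ℕ → α) (ρ : ℕ → P) : Prop :=
  ρ 0 ∈ N.init ∧ ∀ i, ρ (i + 1) ∈ N.delta (ρ i) (w i)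

/-- An accepting macrorun of `N` over `w`. -/
def IsAccMacrorun (N : NBA α P) (w : ℕ → α) (ρ : ℕ → P) : Prop :=
  N.IsMacrorun w ρ ∧ ∀ n, ∃ m, n ≤ m ∧ ρ m ∈ N.acc

/-- The language of an NBA. -/
def lang (N : NBA α P) : Set (ℕ → α) := {w | ∃ ρ, N.IsAccMacrorun w ρ}

/-- `N^m`: the NBA `N` with set of initial states `{m}`. -/
def fromState (N : NBA α P) (p : P) : NBA α P := { N with init := {p} }

/-- An NBA is unambiguous if it has at most one accepting macrorun over every word. -/
def Unambiguous (N : NBA α P) : Prop :=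
  ∀ w ρ₁ ρ₂, N.IsAccMacrorun w ρ₁ → N.IsAccMacrorun w ρ₂ → ρ₁ = ρ₂

end NBA

/-- Macrostates of the Bustan–Rubin–Vardi construction: tuples `(Q₁, Q₂, Q₃, Q₄)`. -/
abbrev BRVState (Q : Type u) := Set Q × Set Q × Set Q × Set Q

/-- Consistency of a BRV tuple: `Q₂ = Q∖Q₁`, `Q₃ ⊆ Q₁∖F`, `Q₄ ⊆ Q₂∖F̂`. -/
def BRVConsistent {α : Type v} {Q : Type u} (M : ABA α Q) (m : BRVState Q) : Prop :=
  m.2.1 = m.1ᶜ ∧ m.2.2.1 ⊆ m.1 \ M.acc ∧ m.2.2.2 ⊆ m.2.1 \ M.dual.acc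

/-- The Bustan–Rubin–Vardi NBA `B` constructed from an AWA. -/
def BRV {α : Type v} {Q : Type u} (M : ABA α Q) : NBA α (BRVState Q) where
  init := {m | BRVConsistent M m ∧ M.init ∈ m.1}
  delta := fun m σ =>
    {m' | BRVConsistent M m ∧ BRVConsistent M m' ∧
      (∀ s ∈ m.1, PosBool.Sat m'.1 (M.delta s σ)) ∧
      (∀ s ∈ m.2.1, PosBool.Sat m'.2.1 (M.dual.delta s σ)) ∧
      ((m.2.2.1 = ∅ ∧ m.2.2.2 = ∅ ∧ m'.2.2.1 = m'.1 \ M.acc ∧ m'.2.2.2 = m'.2.1 \ M.dual.acc) ∨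
       ((m.2.2.1 ≠ ∅ ∨ m.2.2.2 ≠ ∅) ∧
        (∃ Y₃ ⊆ m'.1, (∀ s ∈ m.2.2.1, PosBool.Sat Y₃ (M.delta s σ)) ∧ m'.2.2.1 = Y₃ \ M.acc) ∧
        (∃ Y₄ ⊆ m'.2.1, (∀ s ∈ m.2.2.2, PosBool.Sat Y₄ (M.dual.delta s σ)) ∧
          m'.2.2.2 = Y₄ \ M.dual.acc)))}
  acc := {m | BRVConsistent M m ∧ m.2.2.1 = ∅ ∧ m.2.2.2 = ∅}

/-- The domain of the distance function at level `i`: `(Q₁ⁱ ∩ R) ∪ (Acc ∖ Q₁ⁱ)`. -/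
def DistDom {α : Type v} {Q : Type u} (M : ABA α Q) (QS : ℕ → Set Q) (i : ℕ) : Set Q :=
  (QS i ∩ M.RejPart) ∪ (M.AccPart \ QS i)

/-- Consistency of a sequence of distance functions (Rules R1 and R2). -/
def ConsistentDist {α : Type v} {Q : Type u} (M : ABA α Q) (w : ℕ → α)
    (QS : ℕ → Set Q) (d : ℕ → Q → ℕ) : Prop :=
  ∀ i : ℕ,
    (∀ p ∈ M.RejPart ∩ QS i,
      PosBool.Sat ((QS (i + 1) \ M.sccOf p) ∪
        {q | q ∈ M.sccOf p ∩ QS (i + 1) ∧ d (i + 1) q ≤ d i p - 1}) (M.delta p (w i)) ∧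
      (1 < d i p →
        ¬ PosBool.Sat ((QS (i + 1) \ M.sccOf p) ∪
          {q | q ∈ M.sccOf p ∩ QS (i + 1) ∧ d (i + 1) q ≤ d i p - 2}) (M.delta p (w i)))) ∧
    (∀ p ∈ M.AccPart \ QS i,
      PosBool.Sat ((QS (i + 1) ∪ M.sccOf p)ᶜ ∪
        {q | q ∈ M.sccOf p \ QS (i + 1) ∧ d (i + 1) q ≤ d i p - 1}) (M.dual.delta p (w i)) ∧
      (1 < d i p →
        ¬ PosBool.Sat ((QS (i + 1) ∪ M.sccOf p)ᶜ ∪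
          {q | q ∈ M.sccOf p \ QS (i + 1) ∧ d (i + 1) q ≤ d i p - 2}) (M.dual.delta p (w i))))

/-- Strict part of a preorder. -/
def StrictOf {Q : Type u} (le : Q → Q → Prop) (p q : Q) : Prop := le p q ∧ ¬ le q p

/-- `le` is a total preorder on `D` (as a relation over `D × D`). -/
def IsTotalPreorderOn {Q : Type u} (D : Set Q) (le : Q → Q → Prop) : Prop :=
  (∀ p q, le p q → p ∈ D ∧ q ∈ D) ∧ (∀ p ∈ D, le p p) ∧
  (∀ p q r, le p q → le q r → le p r) ∧ (∀ p ∈ D, ∀ q ∈ D, le p q ∨ le q p)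

/-- `D` is downwards closed w.r.t. `le` inside the domain `Dom`. -/
def DownClosed {Q : Type u} (le : Q → Q → Prop) (Dom D : Set Q) : Prop :=
  D ⊆ Dom ∧ ∀ q ∈ D, ∀ q', le q' q → q' ∈ D

/-- The set of maximal elements of a preorder on the domain `Dom`. -/
def MaxSet {Q : Type u} (le : Q → Q → Prop) (Dom : Set Q) : Set Q :=
  {q | q ∈ Dom ∧ ∀ q' ∈ Dom, ¬ StrictOf le q q'}

/-- Rule R1' for a rejecting SCC `C`, letter `σ`, sets `Q₁, Q₁'` and preorders `le, le'`. -/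
def RuleR1 {α : Type v} {Q : Type u} (M : ABA α Q) (C : Set Q) (σ : α)
    (Q1 Q1' : Set Q) (le le' : Q → Q → Prop) : Prop :=
  ∀ q ∈ C ∩ Q1, ∀ q' ∈ C ∩ Q1,
    (StrictOf le q q' ↔ ∃ r ∈ C ∩ Q1',
      PosBool.Sat ({r' | r' ∈ C ∩ Q1' ∧ StrictOf le' r' r} ∪ (Q1' \ C)) (M.delta q σ) ∧
      ¬ PosBool.Sat ({r' | r' ∈ C ∩ Q1' ∧ StrictOf le' r' r} ∪ (Q1' \ C)) (M.delta q' σ))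

/-- Rule R2' for an accepting SCC `C`, letter `σ`, sets `Q₁, Q₁'` and preorders `le, le'`. -/
def RuleR2 {α : Type v} {Q : Type u} (M : ABA α Q) (C : Set Q) (σ : α)
    (Q1 Q1' : Set Q) (le le' : Q → Q → Prop) : Prop :=
  ∀ q ∈ C \ Q1, ∀ q' ∈ C \ Q1,
    (StrictOf le q q' ↔ ∃ r ∈ C \ Q1',
      PosBool.Sat ({r' | r' ∈ C \ Q1' ∧ StrictOf le' r' r} ∪ (Q1' ∪ C)ᶜ) (M.dual.delta q σ) ∧
      ¬ PosBool.Sat ({r' | r' ∈ C \ Q1' ∧ StrictOf le' r' r} ∪ (Q1' ∪ C)ᶜ) (M.dual.delta q' σ))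

/-- Consistency of a sequence of families of total preorders (Rules R1' and R2'). -/
def ConsistentPre {α : Type v} {Q : Type u} (M : ABA α Q) (w : ℕ → α)
    (QS : ℕ → Set Q) (pre : ℕ → Set Q → Q → Q → Prop) : Prop :=
  ∀ i C, M.IsSCC C →
    (C ⊆ M.RejPart →
      IsTotalPreorderOn (C ∩ QS i) (pre i C) ∧
      RuleR1 M C (w i) (QS i) (QS (i + 1)) (pre i C) (pre (i + 1) C)) ∧
    (C ⊆ M.AccPart →
      IsTotalPreorderOn (C \ QS i) (pre i C) ∧
      RuleR2 M C (w i) (QS i) (QS (i + 1)) (pre i C) (pre (i + 1) C))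

/-- Macrostates of the `B_u` construction: `(Q₁, Q₂, {⪯_C}_{C∈S}, S, D)`. -/
abbrev BuState (Q : Type u) := Set Q × Set Q × (Set Q → Q → Q → Prop) × Set Q × Set Q

def BuState.q1 {Q : Type u} (m : BuState Q) : Set Q := m.1
def BuState.q2 {Q : Type u} (m : BuState Q) : Set Q := m.2.1
def BuState.pre {Q : Type u} (m : BuState Q) : Set Q → Q → Q → Prop := m.2.2.1
def BuState.sS {Q : Type u} (m : BuState Q) : Set Q := m.2.2.2.1
def BuState.dD {Q : Type u} (m : BuState Q) : Set Q := m.2.2.2.2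

/-- Well-formedness of a `B_u` macrostate. -/
def BuWF {α : Type v} {Q : Type u} (M : ABA α Q) (m : BuState Q) : Prop :=
  m.q2 = m.q1ᶜ ∧
  (∀ C, M.IsSCC C →
    (C ⊆ M.RejPart → IsTotalPreorderOn (m.q1 ∩ C) (m.pre C)) ∧
    (C ⊆ M.AccPart → IsTotalPreorderOn (m.q2 ∩ C) (m.pre C))) ∧
  (∀ C, ¬ M.IsSCC C → m.pre C = fun _ _ => False) ∧
  M.IsSCC m.sS ∧
  (m.sS ⊆ M.RejPart → DownClosed (m.pre m.sS) (m.q1 ∩ m.sS) m.dD) ∧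
  (m.sS ⊆ M.AccPart → DownClosed (m.pre m.sS) (m.q2 ∩ m.sS) m.dD)

/-- The NBA `B_u` constructed from an AWA `M`, a round-robin successor `next` on SCCs
and an initial SCC `C₀`. -/
def Bu {α : Type v} {Q : Type u} (M : ABA α Q) (next : Set Q → Set Q) (C0 : Set Q) :
    NBA α (BuState Q) where
  init := {m | BuWF M m ∧ M.init ∈ m.q1 ∧ m.sS = C0 ∧ m.dD = ∅}
  delta := fun m σ =>
    {m' | BuWF M m ∧ BuWF M m' ∧
      (∀ s ∈ m.q1, PosBool.Sat m'.q1 (M.delta s σ)) ∧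
      (∀ s ∈ m.q2, PosBool.Sat m'.q2 (M.dual.delta s σ)) ∧
      (∀ C, M.IsSCC C →
        (C ⊆ M.RejPart → RuleR1 M C σ m.q1 m'.q1 (m.pre C) (m'.pre C)) ∧
        (C ⊆ M.AccPart → RuleR2 M C σ m.q1 m'.q1 (m.pre C) (m'.pre C))) ∧
      (m.dD = ∅ → m'.sS = next m.sS ∧
        (m'.sS ⊆ M.RejPart → m'.dD = m'.q1 ∩ m'.sS) ∧
        (m'.sS ⊆ M.AccPart → m'.dD = m'.q2 ∩ m'.sS)) ∧
      (m.dD ≠ ∅ → m'.sS = m.sS ∧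
        (m.sS ⊆ M.RejPart →
          (∀ s ∈ m.dD, PosBool.Sat (m'.dD ∪ (m'.q1 \ m.sS)) (M.delta s σ)) ∧
          (∀ D'', DownClosed (m'.pre m.sS) (m'.q1 ∩ m.sS) D'' →
            (∀ s ∈ m.dD, PosBool.Sat (D'' ∪ (m'.q1 \ m.sS)) (M.delta s σ)) → m'.dD ⊆ D'')) ∧
        (m.sS ⊆ M.AccPart →
          (∀ s ∈ m.dD, PosBool.Sat (m'.dD ∪ (m'.q2 \ m.sS)) (M.dual.delta s σ)) ∧
          (∀ D'', DownClosed (m'.pre m.sS) (m'.q2 ∩ m.sS) D'' →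
            (∀ s ∈ m.dD, PosBool.Sat (D'' ∪ (m'.q2 \ m.sS)) (M.dual.delta s σ)) → m'.dD ⊆ D'')))}
  acc := {m | BuWF M m ∧ m.dD = ∅}

/-- Macrostates of the `U` construction: `(Q₁, Q₂, ⪯_C, C, D)`. -/
abbrev UState (Q : Type u) := Set Q × Set Q × (Q → Q → Prop) × Set Q × Set Q

def UState.q1 {Q : Type u} (m : UState Q) : Set Q := m.1
def UState.q2 {Q : Type u} (m : UState Q) : Set Q := m.2.1
def UState.pre {Q : Type u} (m : UState Q) : Q → Q → Prop := m.2.2.1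
def UState.cC {Q : Type u} (m : UState Q) : Set Q := m.2.2.2.1
def UState.dD {Q : Type u} (m : UState Q) : Set Q := m.2.2.2.2

/-- Well-formedness of a `U` macrostate. -/
def UWF {α : Type v} {Q : Type u} (M : ABA α Q) (m : UState Q) : Prop :=
  m.q2 = m.q1ᶜ ∧ M.IsSCC m.cC ∧
  (m.cC ⊆ M.RejPart →
    IsTotalPreorderOn (m.q1 ∩ m.cC) m.pre ∧
    (m.dD = m.q1 ∩ m.cC ∨ m.dD = (m.q1 ∩ m.cC) \ MaxSet m.pre (m.q1 ∩ m.cC))) ∧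
  (m.cC ⊆ M.AccPart →
    IsTotalPreorderOn (m.q2 ∩ m.cC) m.pre ∧
    (m.dD = m.q2 ∩ m.cC ∨ m.dD = (m.q2 ∩ m.cC) \ MaxSet m.pre (m.q2 ∩ m.cC)))

/-- The NBA `U` constructed from an AWA `M`, a round-robin successor `next` on SCCs
and an initial SCC `C₀`. -/
def Uaut {α : Type v} {Q : Type u} (M : ABA α Q) (next : Set Q → Set Q) (C0 : Set Q) :
    NBA α (UState Q) where
  init := {m | UWF M m ∧ M.init ∈ m.q1 ∧ m.cC = C0 ∧ m.dD = ∅}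
  delta := fun m σ =>
    {m' | UWF M m ∧ UWF M m' ∧
      (∀ s ∈ m.q1, PosBool.Sat m'.q1 (M.delta s σ)) ∧
      (∀ s ∈ m.q2, PosBool.Sat m'.q2 (M.dual.delta s σ)) ∧
      (m.dD = ∅ → m'.cC = next m.cC ∧
        (m'.cC ⊆ M.RejPart → m'.dD = m'.q1 ∩ m'.cC) ∧
        (m'.cC ⊆ M.AccPart → m'.dD = m'.q2 ∩ m'.cC)) ∧
      (m.dD ≠ ∅ → m'.cC = m.cC ∧
        (m.cC ⊆ M.RejPart →
          RuleR1 M m.cC σ m.q1 m'.q1 m.pre m'.pre ∧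
          DownClosed m'.pre (m'.q1 ∩ m.cC) m'.dD ∧
          (∀ s ∈ m.dD, PosBool.Sat (m'.dD ∪ (m'.q1 \ m.cC)) (M.delta s σ)) ∧
          (∀ D'', DownClosed m'.pre (m'.q1 ∩ m.cC) D'' →
            (∀ s ∈ m.dD, PosBool.Sat (D'' ∪ (m'.q1 \ m.cC)) (M.delta s σ)) → m'.dD ⊆ D'')) ∧
        (m.cC ⊆ M.AccPart →
          RuleR2 M m.cC σ m.q1 m'.q1 m.pre m'.pre ∧
          DownClosed m'.pre (m'.q2 ∩ m.cC) m'.dD ∧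
          (∀ s ∈ m.dD, PosBool.Sat (m'.dD ∪ (m'.q2 \ m.cC)) (M.dual.delta s σ)) ∧
          (∀ D'', DownClosed m'.pre (m'.q2 ∩ m.cC) D'' →
            (∀ s ∈ m.dD, PosBool.Sat (D'' ∪ (m'.q2 \ m.cC)) (M.dual.delta s σ)) → m'.dD ⊆ D'')))}
  acc := {m | UWF M m ∧ m.dD = ∅}

/-- `tpo n`: the number of total preorders on an `n`-element set. -/
noncomputable def tpo (n : ℕ) : ℕ :=
  Nat.card {r : Fin n → Fin n → Prop // Reflexive r ∧ Transitive r ∧ ∀ a b, r a b ∨ r b a}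

/-! ### Positive Boolean formulas and duality -/

namespace PosBool

variable {Q : Type u}

theorem Sat.mono {Y Z : Set Q} (h : Y ⊆ Z) : ∀ {θ : PosBool Q}, Sat Y θ → Sat Z θ
  | .tt, _ => trivial
  | .ff, hs => hs.elim
  | .var _, hs => h hs
  | .band _ _, hs => ⟨Sat.mono h hs.1, Sat.mono h hs.2⟩
  | .bor _ _, hs => hs.imp (Sat.mono h) (Sat.mono h)

theorem Sat.inter_vars {Y : Set Q} {θ : PosBool Q} (h : Sat Y θ) : Sat (Y ∩ vars θ) θ := by
  induction θ with
  | tt => trivial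
  | ff => exact h
  | var q => exact ⟨h, rfl⟩
  | band a b iha ihb =>
    exact ⟨(iha h.1).mono (by simp only [vars]; grind), (ihb h.2).mono (by simp only [vars]; grind)⟩
  | bor a b iha ihb =>
    exact h.imp (fun h => (iha h).mono (by simp only [vars]; grind))
      (fun h => (ihb h).mono (by simp only [vars]; grind))

theorem sat_dual (Y : Set Q) (θ : PosBool Q) : Sat Y θ.dual ↔ ¬ Sat Yᶜ θ := by
  induction θ with
  | tt => simp [dual, Sat]
  | ff => simp [dual, Sat]
  | var q => simp [dual, Sat]
  | band a b iha ihb => simp only [dual, Sat, iha, ihb]; tauto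
  | bor a b iha ihb => simp only [dual, Sat, iha, ihb]; tauto

theorem vars_dual (θ : PosBool Q) : θ.dual.vars = θ.vars := by
  induction θ with
  | tt => rfl
  | ff => rfl
  | var q => rfl
  | band a b iha ihb => simp only [dual, vars, iha, ihb]
  | bor a b iha ihb => simp only [dual, vars, iha, ihb]

end PosBool

namespace ABA

variable {α : Type v} {Q : Type u}

theorem mem_sccOf_self (M : ABA α Q) (q : Q) : q ∈ M.sccOf q :=
  ⟨Relation.ReflTransGen.refl, Relation.ReflTransGen.refl⟩

theorem sccOf_eq {M : ABA α Q} {p q : Q} (h : q ∈ M.sccOf p) : M.sccOf q = M.sccOf p := by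
  ext r
  exact ⟨fun hr => ⟨h.1.trans hr.1, hr.2.trans h.2⟩, fun hr => ⟨h.2.trans hr.1, hr.2.trans h.1⟩⟩

theorem sccOf_dual (M : ABA α Q) (q : Q) : M.dual.sccOf q = M.sccOf q := by
  have he : M.dual.edge = M.edge := by
    funext p r
    simp only [edge, dual, PosBool.vars_dual]
  simp only [sccOf, reach, he]

theorem rejPart_dual (M : ABA α Q) : M.dual.RejPart = M.AccPart := by
  ext q
  change M.dual.sccOf q ∩ M.accᶜ = ∅ ↔ M.sccOf q ⊆ M.acc
  rw [sccOf_dual, ← Set.disjoint_iff_inter_eq_empty, Set.disjoint_compl_right_iff_subset]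

theorem mem_rejPart_of_mem_sccOf {M : ABA α Q} {p q : Q} (hp : p ∈ M.RejPart)
    (h : q ∈ M.sccOf p) : q ∈ M.RejPart := by
  have hp' : M.sccOf p ∩ M.acc = ∅ := hp
  change M.sccOf q ∩ M.acc = ∅
  rwa [sccOf_eq h]

theorem mem_acc_of_mem_accPart {M : ABA α Q} {q : Q} (h : q ∈ M.AccPart) : q ∈ M.acc :=
  h (mem_sccOf_self M q)

theorem not_mem_acc_of_mem_rejPart {M : ABA α Q} {q : Q} (h : q ∈ M.RejPart) : q ∉ M.acc := by
  intro hq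
  have : q ∈ M.sccOf q ∩ M.acc := ⟨mem_sccOf_self M q, hq⟩
  rw [show M.sccOf q ∩ M.acc = ∅ from h] at this
  exact this

end ABA

/-! ### Levels and rule R1 -/

section Levels

variable {α : Type v} {Q : Type u}

/-- The level sets `L_k(i)` of the automaton `M` for a sequence `O` of state sets: the states of
`O i` lying in a rejecting SCC whose distance, as prescribed by rule R1, is at most `k`. -/
def lev (M : ABA α Q) (w : ℕ → α) (O : ℕ → Set Q) : ℕ → ℕ → Set Q
  | 0, _ => ∅
  | k + 1, i => {p | p ∈ M.RejPart ∩ O i ∧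
      PosBool.Sat ((O (i + 1) \ M.sccOf p) ∪ (M.sccOf p ∩ lev M w O k (i + 1))) (M.delta p (w i))}

/-- Rule R1 for an arbitrary sequence `O` of state sets. Applied to the dual automaton and the
complements of the sets `Q₁ⁱ` it expresses rule R2. -/
def HalfConsistent (M : ABA α Q) (w : ℕ → α) (O : ℕ → Set Q) (d : ℕ → Q → ℕ) : Prop :=
  ∀ i : ℕ, ∀ p ∈ M.RejPart ∩ O i,
    PosBool.Sat ((O (i + 1) \ M.sccOf p) ∪
      {q | q ∈ M.sccOf p ∩ O (i + 1) ∧ d (i + 1) q ≤ d i p - 1}) (M.delta p (w i)) ∧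
    (1 < d i p →
      ¬ PosBool.Sat ((O (i + 1) \ M.sccOf p) ∪
        {q | q ∈ M.sccOf p ∩ O (i + 1) ∧ d (i + 1) q ≤ d i p - 2}) (M.delta p (w i)))

theorem lev_subset (M : ABA α Q) (w : ℕ → α) (O : ℕ → Set Q) (k i : ℕ) :
    lev M w O k i ⊆ M.RejPart ∩ O i := by
  cases k with
  | zero => exact Set.empty_subset _
  | succ k => exact fun p hp => hp.1

theorem lev_succ_mono (M : ABA α Q) (w : ℕ → α) (O : ℕ → Set Q) (k : ℕ) :
    ∀ i, lev M w O k i ⊆ lev M w O (k + 1) i := by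
  induction k with
  | zero => exact fun i => Set.empty_subset _
  | succ k ih =>
    exact fun i p hp => ⟨hp.1, hp.2.mono
      (Set.union_subset_union_right _ (Set.inter_subset_inter_right _ (ih (i + 1))))⟩

theorem lev_mono (M : ABA α Q) (w : ℕ → α) (O : ℕ → Set Q) (i : ℕ) :
    Monotone fun k => lev M w O k i :=
  monotone_nat_of_le_succ fun k => lev_succ_mono M w O k i

theorem consistentDist_iff (M : ABA α Q) (w : ℕ → α) (QS : ℕ → Set Q) (d : ℕ → Q → ℕ) :
    ConsistentDist M w QS d ↔
      HalfConsistent M w QS d ∧ HalfConsistent M.dual w (fun i => (QS i)ᶜ) d := by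
  have hc : ∀ i p, (QS (i + 1))ᶜ \ M.sccOf p = (QS (i + 1) ∪ M.sccOf p)ᶜ := by
    intro i p
    rw [Set.compl_union, Set.sdiff_eq]
  simp only [HalfConsistent, ABA.rejPart_dual, ABA.sccOf_dual, hc]
  exact ⟨fun h => ⟨fun i => (h i).1, fun i => (h i).2⟩, fun h i => ⟨h.1 i, h.2 i⟩⟩

/-- Inside the SCC of a rejecting state, a sublevel set of `d` is a level set if `d` describes the
levels. -/
theorem sublevel_eq {M : ABA α Q} {w : ℕ → α} {O : ℕ → Set Q} {d : ℕ → Q → ℕ} {k i : ℕ}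
    (h : ∀ q ∈ M.RejPart ∩ O i, (q ∈ lev M w O k i ↔ d i q ≤ k)) {p : Q} (hp : p ∈ M.RejPart) :
    {q | q ∈ M.sccOf p ∩ O i ∧ d i q ≤ k} = M.sccOf p ∩ lev M w O k i := by
  ext q
  constructor
  · rintro ⟨⟨hq, hO⟩, hd⟩
    exact ⟨hq, (h q ⟨ABA.mem_rejPart_of_mem_sccOf hp hq, hO⟩).2 hd⟩
  · rintro ⟨hq, hl⟩
    have hD := lev_subset M w O k i hl
    exact ⟨⟨hq, hD.2⟩, (h q hD).1 hl⟩

theorem mem_lev_iff_of_half {M : ABA α Q} {w : ℕ → α} {O : ℕ → Set Q} {d : ℕ → Q → ℕ}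
    (hpos : ∀ i, ∀ q ∈ M.RejPart ∩ O i, 0 < d i q) (hd : HalfConsistent M w O d) (k : ℕ) :
    ∀ i, ∀ p ∈ M.RejPart ∩ O i, (p ∈ lev M w O k i ↔ d i p ≤ k) := by
  induction k with
  | zero =>
    intro i p hp
    have := hpos i p hp
    exact ⟨fun h => h.elim, fun h => by omega⟩
  | succ k ih =>
    intro i p hp
    have hpos' := hpos i p hp
    obtain ⟨ha, hb⟩ := hd i p hp
    constructor
    · intro hl
      by_contra hlt
      refine hb (by omega) (hl.2.mono ?_)
      rw [← sublevel_eq (ih (i + 1)) hp.1]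
      exact Set.union_subset_union_right _ fun q hq => ⟨hq.1, by have := hq.2; omega⟩
    · intro hle
      refine ⟨hp, ha.mono ?_⟩
      rw [← sublevel_eq (ih (i + 1)) hp.1]
      exact Set.union_subset_union_right _ fun q hq => ⟨hq.1, by have := hq.2; omega⟩

theorem half_of_mem_lev_iff {M : ABA α Q} {w : ℕ → α} {O : ℕ → Set Q} {d : ℕ → Q → ℕ}
    (h : ∀ k i, ∀ p ∈ M.RejPart ∩ O i, (p ∈ lev M w O k i ↔ d i p ≤ k)) :
    HalfConsistent M w O d := by
  intro i p hp
  have hl : p ∈ lev M w O (d i p) i := (h _ i p hp).2 le_rfl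
  constructor
  · rw [sublevel_eq (h _ (i + 1)) hp.1]
    cases hk : d i p with
    | zero => rw [hk] at hl; exact hl.elim
    | succ m => rw [hk] at hl; exact hl.2
  · intro hlt hs
    rw [sublevel_eq (h _ (i + 1)) hp.1] at hs
    have : p ∈ lev M w O (d i p - 2 + 1) i := ⟨hp, hs⟩
    have := (h _ i p hp).1 this
    omega

/-- Since the state space is finite, the increasing level sets are eventually constant, so a
state outside all levels stays unsatisfied even by the union of all levels. -/
theorem not_sat_of_forall_not_mem_lev [Finite Q] {M : ABA α Q} {w : ℕ → α} {O : ℕ → Set Q}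
    {i : ℕ} {p : Q} (hp : p ∈ M.RejPart ∩ O i) (h : ∀ k, p ∉ lev M w O k i) :
    ¬ PosBool.Sat ((O (i + 1) \ M.sccOf p) ∪ (M.sccOf p ∩ {q | ∃ k, q ∈ lev M w O k (i + 1)}))
      (M.delta p (w i)) := by
  classical
  cases nonempty_fintype Q
  intro hs
  let f : Q → ℕ := fun q => sInf {k | q ∈ lev M w O k (i + 1)}
  refine h (Finset.univ.sup f + 1) ⟨hp, hs.mono ?_⟩
  refine Set.union_subset_union_right _ (Set.inter_subset_inter_right _ ?_)
  intro q hq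
  have hq' : q ∈ lev M w O (f q) (i + 1) := Nat.sInf_mem (s := {k | q ∈ lev M w O k (i + 1)}) hq
  exact lev_mono M w O (i + 1) (Finset.le_sup (f := f) (Finset.mem_univ q)) hq'

end Levels

/-! ### Run DAGs and the sets `Q₁ⁱ` -/

section Runs

variable {α : Type v} {Q : Type u}

/-- The states reached along a finite path of an accepting run DAG accept the corresponding
suffix. -/
theorem mem_QSeq_of_path {M : ABA α Q} {w : ℕ → α} {i : ℕ} {p : Q}
    (G : (M.setInit p).RunDAG (suffix w i)) (hG : G.Accepting) (n : ℕ) (b : ℕ → Q)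
    (h0 : b 0 = p) (hb : ∀ ℓ < n, G.E ℓ (b ℓ) (b (ℓ + 1))) : b n ∈ QSeq M w (i + n) := by
  refine ⟨⟨fun ℓ => G.V (n + ℓ), fun ℓ => G.E (n + ℓ), ?_, fun ℓ => G.edge_src (n + ℓ),
    fun ℓ => G.edge_tgt (n + ℓ), ?_⟩, ?_⟩
  · cases n with
    | zero =>
      have := G.init_mem
      change b 0 ∈ G.V 0
      rw [h0]; exact this
    | succ n => exact G.edge_tgt n _ _ (hb n (Nat.lt_succ_self n))
  · intro ℓ q hq
    have := G.sat (n + ℓ) q hq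
    simp only [suffix, ← Nat.add_assoc] at this ⊢
    exact this
  · rintro c ⟨hc0, hc⟩ m
    -- prepend the path to the branch of the shifted run DAG
    have hbr : G.IsBranch fun ℓ => if ℓ < n then b ℓ else c (ℓ - n) := by
      have hc0' : c 0 = b n := hc0
      constructor
      · change (if 0 < n then b 0 else c (0 - n)) = p
        rcases Nat.eq_zero_or_pos n with hn | hn
        · subst hn; simpa [hc0'] using h0
        · simpa [hn] using h0
      · intro ℓ
        rcases lt_trichotomy (ℓ + 1) n with hl | hl | hl
        · simpa [hl, show ℓ < n by omega] using hb ℓ (by omega)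
        · have := hb ℓ (by omega)
          rw [hl] at this
          simpa [hl, show ℓ < n by omega, hc0'] using this
        · have := hc (ℓ - n)
          simp only [show n + (ℓ - n) = ℓ by omega] at this
          simpa [show ¬ ℓ < n by omega, show ¬ ℓ + 1 < n by omega,
            show ℓ + 1 - n = ℓ - n + 1 by omega] using this
    obtain ⟨k, hk, hacc⟩ := hG _ hbr (n + m)
    refine ⟨k - n, by omega, ?_⟩
    change c (k - n) ∈ M.acc
    change (if k < n then b k else c (k - n)) ∈ M.acc at hacc
    rwa [if_neg (by omega)] at hacc

theorem sat_QSeq {M : ABA α Q} {w : ℕ → α} {i : ℕ} {p : Q} (hp : p ∈ QSeq M w i) :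
    PosBool.Sat (QSeq M w (i + 1)) (M.delta p (w i)) := by
  obtain ⟨G, hG⟩ := hp
  refine PosBool.Sat.mono ?_ (G.sat 0 p G.init_mem)
  intro q hq
  refine mem_QSeq_of_path G hG 1 (fun ℓ => if ℓ = 0 then p else q) rfl ?_
  intro ℓ hℓ
  obtain rfl : ℓ = 0 := by omega
  exact hq

/-! ### Every state of the domain has a level -/

theorem exists_mem_lev_rej [Finite Q] {M : ABA α Q} {w : ℕ → α} {i : ℕ} {p : Q}
    (hp : p ∈ M.RejPart ∩ QSeq M w i) : ∃ k, p ∈ lev M w (QSeq M w) k i := by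
  classical
  by_contra! hno
  obtain ⟨hrej, G, hG⟩ := hp
  let P : ℕ → Q → Prop := fun n q =>
    (∃ b : ℕ → Q, b 0 = p ∧ b n = q ∧ ∀ ℓ < n, G.E ℓ (b ℓ) (b (ℓ + 1))) ∧
      q ∈ G.V n ∧ q ∈ M.sccOf p ∧ ∀ k, q ∉ lev M w (QSeq M w) k (i + n)
  have hP0 : P 0 p := ⟨⟨fun _ => p, rfl, rfl, fun ℓ h => by omega⟩, G.init_mem,
    M.mem_sccOf_self p, hno⟩
  have hstep : ∀ n q, ∃ q', P n q → P (n + 1) q' ∧ G.E n q q' := by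
    intro n q
    by_cases hPq : P n q
    swap
    · exact ⟨q, fun h => (hPq h).elim⟩
    obtain ⟨⟨b, hb0, hbn, hb⟩, hV, hscc, hlev⟩ := hPq
    have hpath : ∀ q', G.E n q q' → ∃ b : ℕ → Q, b 0 = p ∧ b (n + 1) = q' ∧
        ∀ ℓ < n + 1, G.E ℓ (b ℓ) (b (ℓ + 1)) := by
      intro q' hq'
      refine ⟨fun ℓ => if ℓ ≤ n then b ℓ else q', by simpa using hb0, by simp, ?_⟩
      intro ℓ hℓ
      rcases Nat.lt_or_ge ℓ n with h | h
      · simpa [show ℓ ≤ n by omega, show ℓ + 1 ≤ n by omega] using hb ℓ h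
      · obtain rfl : ℓ = n := by omega
        simpa [hbn] using hq'
    have hqQ : q ∈ QSeq M w (i + n) := hbn ▸ mem_QSeq_of_path G hG n b hb0 hb
    have hns := not_sat_of_forall_not_mem_lev
      ⟨ABA.mem_rejPart_of_mem_sccOf hrej hscc, hqQ⟩ hlev
    -- some successor stays in the component of `p` and has no level either
    by_contra! hcon
    refine hns (PosBool.Sat.mono ?_ (G.sat n q hV))
    intro q' hq'
    obtain ⟨c, hc0, hcn, hc⟩ := hpath q' hq'
    have hq'Q : q' ∈ QSeq M w (i + n + 1) := hcn ▸ mem_QSeq_of_path G hG (n + 1) c hc0 hc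
    by_cases hs : q' ∈ M.sccOf q
    · refine Or.inr ⟨hs, ?_⟩
      by_contra hl
      refine (hcon q').2 ⟨⟨c, hc0, hcn, hc⟩, G.edge_tgt n q q' hq', ?_, ?_⟩ hq'
      · rw [← ABA.sccOf_eq hscc]; exact hs
      · exact fun k hk => hl ⟨k, hk⟩
    · exact Or.inl ⟨hq'Q, hs⟩
  choose f hf using hstep
  let x : ℕ → Q := fun n => Nat.rec p (fun n q => f n q) n
  have hx : ∀ n, P n (x n) := by
    intro n
    induction n with
    | zero => exact hP0
    | succ n ih => exact (hf n (x n) ih).1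
  obtain ⟨m, -, hm⟩ := hG x ⟨rfl, fun n => (hf n (x n) (hx n)).2⟩ 0
  exact ABA.not_mem_acc_of_mem_rejPart
    (ABA.mem_rejPart_of_mem_sccOf hrej (hx m).2.2.1) hm

/-- An infinite path of the underlying graph of a finite automaton is eventually trapped in a
single SCC: the sets of reachable states decrease along it. -/
theorem exists_forall_mem_sccOf [Finite Q] (M : ABA α Q) (b : ℕ → Q)
    (hb : ∀ n, M.edge (b n) (b (n + 1))) : ∃ N, ∀ m, N ≤ m → b m ∈ M.sccOf (b N) := by
  have hanti : Antitone fun n => {q | M.reach (b n) q} :=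
    antitone_nat_of_succ_le fun n q hq => Relation.ReflTransGen.head (hb n) hq
  obtain ⟨N, hN⟩ := WellFoundedLT.antitone_chain_condition hanti
  refine ⟨N, fun m hm => ?_⟩
  have h : {q | M.reach (b N) q} = {q | M.reach (b m) q} := hN m hm
  constructor
  · have : b m ∈ {q | M.reach (b m) q} := Relation.ReflTransGen.refl
    rw [← h] at this
    exact this
  · have : b N ∈ {q | M.reach (b N) q} := Relation.ReflTransGen.refl
    rw [h] at this
    exact this

theorem exists_mem_lev_acc [Finite Q] {M : ABA α Q} (hweak : M.IsWeak) {w : ℕ → α} {i : ℕ}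
    {p : Q} (hp : p ∈ M.AccPart \ QSeq M w i) :
    ∃ k, p ∈ lev M.dual w (fun j => (QSeq M w j)ᶜ) k i := by
  by_contra! hno
  set O : ℕ → Set Q := fun j => (QSeq M w j)ᶜ with hO
  -- accepting states outside all dual levels
  let B : ℕ → Set Q := fun j => {q | q ∈ M.AccPart \ QSeq M w j ∧ ∀ k, q ∉ lev M.dual w O k j}
  let E : ℕ → Q → Q → Prop := fun j q q' => q' ∈ (M.delta q (w j)).vars ∧
    ((q ∈ QSeq M w j ∧ q' ∈ QSeq M w (j + 1) ∧
        ∀ k, q ∈ lev M w (QSeq M w) (k + 1) j → q' ∈ M.sccOf q →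
          q' ∈ lev M w (QSeq M w) k (j + 1)) ∨
      (q ∈ B j ∧ q' ∈ QSeq M w (j + 1) ∪ B (j + 1)))
  have hsatQ : ∀ j, ∀ q ∈ QSeq M w j, PosBool.Sat {q' | E j q q'} (M.delta q (w j)) := by
    classical
    intro j q hq
    by_cases hr : ∃ k, q ∈ lev M w (QSeq M w) k j
    · -- the least level of `q` yields successors that work for all its levels
      have hl := Nat.find_spec hr
      obtain ⟨m, hm⟩ : ∃ m, Nat.find hr = m + 1 := by
        refine Nat.exists_eq_succ_of_ne_zero fun h0 => ?_
        rw [h0] at hl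
        exact hl
      rw [hm] at hl
      refine hl.2.inter_vars.mono ?_
      rintro q' ⟨hq', hv⟩
      refine ⟨hv, Or.inl ⟨hq, ?_, ?_⟩⟩
      · exact hq'.elim (fun h => h.1) (fun h => (lev_subset _ _ _ _ _ h.2).2)
      · intro k hk hs
        have hle : m ≤ k := by have := Nat.find_min' hr hk; omega
        exact hq'.elim (fun h => (h.2 hs).elim) (fun h => lev_mono _ _ _ _ hle h.2)
    · refine (sat_QSeq hq).inter_vars.mono ?_
      rintro q' ⟨hq', hv⟩
      exact ⟨hv, Or.inl ⟨hq, hq', fun k hk => (hr ⟨_, hk⟩).elim⟩⟩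
  have hsatB : ∀ j, ∀ q ∈ B j, PosBool.Sat {q' | E j q q'} (M.delta q (w j)) := by
    intro j q hq
    have hns := not_sat_of_forall_not_mem_lev (M := M.dual) (w := w) (O := O) (i := j) (p := q)
      ⟨by rw [ABA.rejPart_dual]; exact hq.1.1, hq.1.2⟩ hq.2
    rw [show M.dual.delta q (w j) = (M.delta q (w j)).dual from rfl, PosBool.sat_dual, not_not,
      ABA.sccOf_dual] at hns
    refine hns.inter_vars.mono ?_
    rintro q' ⟨hq', hv⟩
    refine ⟨hv, Or.inr ⟨hq, ?_⟩⟩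
    by_cases hQ : q' ∈ QSeq M w (j + 1)
    · exact Or.inl hQ
    · refine Or.inr ⟨⟨?_, hQ⟩, fun k hk => hq' ?_⟩
      · have hs : q' ∈ M.sccOf q := by
          by_contra hs
          exact hq' (Or.inl ⟨hQ, hs⟩)
        rw [← ABA.rejPart_dual]
        refine ABA.mem_rejPart_of_mem_sccOf (p := q) (by rw [ABA.rejPart_dual]; exact hq.1.1) ?_
        rwa [ABA.sccOf_dual]
      · by_cases hs : q' ∈ M.sccOf q
        · exact Or.inr ⟨hs, k, hk⟩
        · exact Or.inl ⟨hQ, hs⟩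
  let G : (M.setInit p).RunDAG (suffix w i) :=
    { V := fun ℓ => QSeq M w (i + ℓ) ∪ B (i + ℓ)
      E := fun ℓ => E (i + ℓ)
      init_mem := Or.inr ⟨hp, hno⟩
      edge_src := fun ℓ q q' h => h.2.imp (fun h => h.1) (fun h => h.1)
      edge_tgt := fun ℓ q q' h => h.2.elim (fun h => Or.inl h.2.1) (fun h => h.2)
      sat := fun ℓ q hq => hq.elim (hsatQ (i + ℓ) q) (hsatB (i + ℓ) q) }
  refine hp.2 ⟨G, ?_⟩
  rintro b ⟨-, hb⟩ n
  by_contra! hacc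
  have hbE : ∀ ℓ, E (i + ℓ) (b ℓ) (b (ℓ + 1)) := hb
  obtain ⟨N, hN⟩ := exists_forall_mem_sccOf M b fun ℓ => ⟨w (i + ℓ), (hbE ℓ).1⟩
  have hrej : ∀ m, n ≤ m → b m ∈ M.RejPart := fun m hm =>
    (hweak (b m)).resolve_left fun h => hacc m hm (ABA.mem_acc_of_mem_accPart h)
  -- from `max n N` on the branch stays in one rejecting SCC, so no state on it has a level
  have hdesc : ∀ k m, max n N ≤ m → b m ∉ lev M w (QSeq M w) k (i + m) := by
    intro k
    induction k with
    | zero => exact fun m _ h => h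
    | succ k ih =>
      intro m hm hl
      refine ih (m + 1) (by omega) ?_
      rcases (hbE m).2 with h | h
      · refine h.2.2 k hl ?_
        rw [ABA.sccOf_eq (hN m (by omega))]
        exact hN (m + 1) (by omega)
      · exact (h.1.1.2 (lev_subset _ _ _ _ _ hl).2).elim
  have hQ : b (max n N) ∈ QSeq M w (i + max n N) := by
    rcases (hbE (max n N)).2 with h | h
    · exact h.1
    · exact (hacc _ (le_max_left n N) (ABA.mem_acc_of_mem_accPart h.1.1.1)).elim
  obtain ⟨k, hk⟩ := exists_mem_lev_rej ⟨hrej _ (le_max_left n N), hQ⟩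
  exact hdesc k _ le_rfl hk

end Runs

theorem mem_lev_iff_sInf_le {α : Type v} {Q : Type u} {M : ABA α Q} {w : ℕ → α} {O : ℕ → Set Q}
    {i : ℕ} {p : Q} (h : ∃ k, p ∈ lev M w O k i) (k : ℕ) :
    p ∈ lev M w O k i ↔ sInf {m | p ∈ lev M w O m i} ≤ k :=
  ⟨fun hk => Nat.sInf_le hk, fun hk => lev_mono M w O i hk (Nat.sInf_mem h)⟩

/-- existence and uniqueness of the consistent sequence of distance
functions for `R_w`. -/
theorem unique_distance {α Q : Type} [Fintype α] [Fintype Q] (M : ABA α Q)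
    (hweak : M.IsWeak) (hcomp : M.Complete) (w : ℕ → α) :
    ∃ d : ℕ → Q → ℕ,
      ((∀ i : ℕ, ∀ q ∈ DistDom M (QSeq M w) i, 0 < d i q) ∧
        ConsistentDist M w (QSeq M w) d) ∧
      ∀ d' : ℕ → Q → ℕ,
        ((∀ i : ℕ, ∀ q ∈ DistDom M (QSeq M w) i, 0 < d' i q) ∧
          ConsistentDist M w (QSeq M w) d') →
        ∀ i : ℕ, ∀ q ∈ DistDom M (QSeq M w) i, d i q = d' i q := by
  classical
  set QS := QSeq M w with hQS
  let O : ℕ → Set Q := fun j => (QS j)ᶜ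
  let d : ℕ → Q → ℕ := fun i q =>
    if q ∈ M.RejPart then sInf {m | q ∈ lev M w QS m i} else sInf {m | q ∈ lev M.dual w O m i}
  have h1 : ∀ k i, ∀ p ∈ M.RejPart ∩ QS i, (p ∈ lev M w QS k i ↔ d i p ≤ k) := by
    intro k i p hp
    simp only [d, if_pos hp.1]
    exact mem_lev_iff_sInf_le (exists_mem_lev_rej hp) k
  have h2 : ∀ k i, ∀ p ∈ M.dual.RejPart ∩ O i, (p ∈ lev M.dual w O k i ↔ d i p ≤ k) := by
    intro k i p hp
    have hacc : p ∈ M.AccPart := by rw [← ABA.rejPart_dual]; exact hp.1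
    have hnr : p ∉ M.RejPart := fun h =>
      ABA.not_mem_acc_of_mem_rejPart h (ABA.mem_acc_of_mem_accPart hacc)
    simp only [d, if_neg hnr]
    exact mem_lev_iff_sInf_le (exists_mem_lev_acc hweak ⟨hacc, hp.2⟩) k
  have hdom : ∀ i, ∀ q ∈ DistDom M QS i, q ∈ M.RejPart ∩ QS i ∨ q ∈ M.dual.RejPart ∩ O i := by
    intro i q hq
    rw [ABA.rejPart_dual]
    exact hq.imp (fun h => ⟨h.2, h.1⟩) (fun h => h)
  refine ⟨d, ⟨?_, ?_⟩, ?_⟩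
  · -- level `0` is empty
    intro i q hq
    rw [Nat.pos_iff_ne_zero]
    intro h0
    rcases hdom i q hq with h | h
    · exact (h1 0 i q h).2 h0.le
    · exact (h2 0 i q h).2 h0.le
  · exact (consistentDist_iff M w QS d).2 ⟨half_of_mem_lev_iff h1, half_of_mem_lev_iff h2⟩
  · rintro d' ⟨hpos, hcons⟩ i q hq
    obtain ⟨hc1, hc2⟩ := (consistentDist_iff M w QS d').1 hcons
    refine eq_of_forall_ge_iff fun k => ?_
    rcases hdom i q hq with h | h
    · rw [← h1 k i q h]
      exact mem_lev_iff_of_half (fun i q hq => hpos i q (Or.inl ⟨hq.2, hq.1⟩)) hc1 k i q h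
    · rw [← h2 k i q h]
      refine mem_lev_iff_of_half (fun i q hq => hpos i q (Or.inr ?_)) hc2 k i q h
      rw [ABA.rejPart_dual] at hq
      exact hq
end

section
/- Let A be an AWA and w ∈ Σ^ω with unique sequence R_w = Q₁⁰Q₁¹⋯. Then there exists a consistent sequence P_w = (Q₁⁰,{⪯⁰_C}_{C∈S})(Q₁¹,{⪯¹_C}_{C∈S})⋯ of families of total preorders whose first components form R_w. -/
/-!
Rule R1' (and likewise R2') says exactly that `⪯ⁱ_C` is the preorder induced by `⪯ⁱ⁺¹_C` as
follows. The strict initial segments of `⪯ⁱ⁺¹_C`, each enlarged by a fixed set, form a chain, and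
satisfaction of a positive formula is monotone along it; states are compared by how early in the
chain their transition formula becomes satisfied. This comparison is automatically a total
preorder (`isTotalPreorderOn_pull`) whose strict part is the one demanded by the rule
(`strictOf_pull`). A consistent sequence is therefore a point of the inverse limit of the finite
nonempty sets of total preorders on the successive domains, and such a limit is nonempty
(`exists_preorder_seq`). The SCCs are treated independently of each other, and an SCC is nonempty,
so it is not both rejecting and accepting.
-/

universe u v

theorem PosBool.Sat.mono_s7 {Q : Type*} {X Y : Set Q} (h : X ⊆ Y) {θ : PosBool Q}
    (hθ : PosBool.Sat X θ) : PosBool.Sat Y θ := by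
  induction θ with
  | tt => trivial
  | ff => exact hθ
  | var q => exact h hθ
  | band a b iha ihb => exact ⟨iha hθ.1, ihb hθ.2⟩
  | bor a b iha ihb => exact hθ.imp iha ihb

/-- The strict initial segment of `r` in `D'` with respect to `le'`, enlarged by `B`. -/
def initSeg {Q : Type*} (D' B : Set Q) (le' : Q → Q → Prop) (r : Q) : Set Q :=
  {r' | r' ∈ D' ∧ StrictOf le' r' r} ∪ B

/-- The relation on `D` that a relation `le'` on `D'` induces through the formulas `θ`: `q` lies
below `q'` if every initial segment of `D'` satisfying `θ q'` also satisfies `θ q`. -/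
def pull {Q : Type*} (D D' B : Set Q) (θ : Q → PosBool Q) (le' : Q → Q → Prop) (q q' : Q) :
    Prop :=
  q ∈ D ∧ q' ∈ D ∧ ∀ r ∈ D', PosBool.Sat (initSeg D' B le' r) (θ q') →
    PosBool.Sat (initSeg D' B le' r) (θ q)

theorem initSeg_mono {Q : Type*} {D' : Set Q} (B : Set Q) {le' : Q → Q → Prop}
    (h : IsTotalPreorderOn D' le') {r s : Q} (hrs : le' r s) :
    initSeg D' B le' r ⊆ initSeg D' B le' s := by
  rintro x (⟨hx, hxr, hrx⟩ | hx)
  · exact Or.inl ⟨hx, h.2.2.1 _ _ _ hxr hrs, fun hsx => hrx (h.2.2.1 _ _ _ hrs hsx)⟩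
  · exact Or.inr hx

theorem isTotalPreorderOn_pull {Q : Type*} (D : Set Q) {D' : Set Q} (B : Set Q)
    (θ : Q → PosBool Q) {le' : Q → Q → Prop} (h : IsTotalPreorderOn D' le') :
    IsTotalPreorderOn D (pull D D' B θ le') := by
  refine ⟨fun p q hpq => ⟨hpq.1, hpq.2.1⟩, fun p hp => ⟨hp, hp, fun _ _ h => h⟩,
    fun p q r hpq hqr => ⟨hpq.1, hqr.2.1, fun s hs hr => hpq.2.2 s hs (hqr.2.2 s hs hr)⟩,
    fun p hp q hq => ?_⟩
  by_contra! hcon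
  have h₁ : ∃ r ∈ D', PosBool.Sat (initSeg D' B le' r) (θ q) ∧
      ¬ PosBool.Sat (initSeg D' B le' r) (θ p) := by
    by_contra! hc
    exact hcon.1 ⟨hp, hq, hc⟩
  have h₂ : ∃ r ∈ D', PosBool.Sat (initSeg D' B le' r) (θ p) ∧
      ¬ PosBool.Sat (initSeg D' B le' r) (θ q) := by
    by_contra! hc
    exact hcon.2 ⟨hq, hp, hc⟩
  obtain ⟨r, hr, hrq, hrp⟩ := h₁
  obtain ⟨s, hs, hsp, hsq⟩ := h₂
  rcases h.2.2.2 r hr s hs with hrs | hsr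
  · exact hsq (hrq.mono_s7 (initSeg_mono B h hrs))
  · exact hrp (hsp.mono_s7 (initSeg_mono B h hsr))

theorem strictOf_pull {Q : Type*} {D D' : Set Q} (B : Set Q) (θ : Q → PosBool Q)
    {le' : Q → Q → Prop} (h : IsTotalPreorderOn D' le') {q q' : Q} (hq : q ∈ D) (hq' : q' ∈ D) :
    StrictOf (pull D D' B θ le') q q' ↔ ∃ r ∈ D', PosBool.Sat (initSeg D' B le' r) (θ q) ∧
      ¬ PosBool.Sat (initSeg D' B le' r) (θ q') := by
  constructor
  · rintro ⟨-, hn⟩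
    by_contra! hc
    exact hn ⟨hq', hq, hc⟩
  · rintro ⟨r, hr, h₁, h₂⟩
    have hn : ¬ pull D D' B θ le' q' q := fun hle => h₂ (hle.2.2 r hr h₁)
    exact ⟨((isTotalPreorderOn_pull D B θ h).2.2.2 q hq q' hq').resolve_right hn, hn⟩

/-- Compactness: total preorders on the domains `D i` can be chosen coherently, each one being
induced by the next through the formulas `θ i`. -/
theorem exists_preorder_seq {Q : Type} [Finite Q] (D B : ℕ → Set Q) (θ : ℕ → Q → PosBool Q) :
    ∃ pre : ℕ → Q → Q → Prop, ∀ i, IsTotalPreorderOn (D i) (pre i) ∧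
      pre i = pull (D i) (D (i + 1)) (B i) (θ i) (pre (i + 1)) := by
  let T : ℕ → Type := fun i => {le : Q → Q → Prop // IsTotalPreorderOn (D i) le}
  let f : ∀ i, T (i + 1) → T i := fun i le =>
    ⟨pull (D i) (D (i + 1)) (B i) (θ i) le.1, isTotalPreorderOn_pull _ _ _ le.2⟩
  let F : CategoryTheory.Functor ℕᵒᵖ Type :=
    CategoryTheory.Functor.ofOpSequence (X := T)
      (fun i => TypeCat.ofHom (f i))
  have hfin : ∀ j, Finite (F.obj j) := fun j =>
    (inferInstance : Finite {le : Q → Q → Prop // IsTotalPreorderOn (D j.unop) le})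
  have hne : ∀ j, Nonempty (F.obj j) := fun j =>
    ⟨(⟨fun p q => p ∈ D j.unop ∧ q ∈ D j.unop, fun _ _ h => h, fun _ h => ⟨h, h⟩,
      fun _ _ _ h h' => ⟨h.1, h'.2⟩, fun _ h _ h' => Or.inl ⟨h, h'⟩⟩ :
      {le : Q → Q → Prop // IsTotalPreorderOn (D j.unop) le})⟩
  obtain ⟨u, hu⟩ := nonempty_sections_of_finite_inverse_system F
  refine ⟨fun i => (show T i from u (Opposite.op i)).1, fun i =>
    ⟨(show T i from u (Opposite.op i)).2, ?_⟩⟩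
  have h := hu (CategoryTheory.homOfLE (Nat.le_succ i)).op
  have hmap : F.map (CategoryTheory.homOfLE (Nat.le_succ i)).op = _ :=
    CategoryTheory.Functor.ofOpSequence_map_homOfLE_succ _ i
  rw [hmap] at h
  exact congrArg Subtype.val h.symm

/-- existence of a consistent sequence of families of total preorders
for `R_w`. -/
theorem exists_consistent_preorders {α Q : Type} [Fintype α] [Fintype Q] (M : ABA α Q)
    (hweak : M.IsWeak) (hcomp : M.Complete) (w : ℕ → α) :
    ∃ pre : ℕ → Set Q → Q → Q → Prop, ConsistentPre M w (QSeq M w) pre := by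
  classical
  choose preR hR using fun C : Set Q => exists_preorder_seq (fun i => C ∩ QSeq M w i)
    (fun i => QSeq M w (i + 1) \ C) (fun i q => M.delta q (w i))
  choose preA hA using fun C : Set Q => exists_preorder_seq (fun i => C \ QSeq M w i)
    (fun i => (QSeq M w (i + 1) ∪ C)ᶜ) (fun i q => M.dual.delta q (w i))
  refine ⟨fun i C => if C ⊆ M.RejPart then preR C i else preA C i, fun i C hC => ⟨?_, ?_⟩⟩
  · intro h
    simp only [if_pos h]
    refine ⟨(hR C i).1, fun q hq q' hq' => ?_⟩
    rw [(hR C i).2]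
    exact strictOf_pull _ (fun q => M.delta q (w i)) (hR C (i + 1)).1 hq hq'
  · intro h
    have hn : ¬ C ⊆ M.RejPart := by
      obtain ⟨q, rfl⟩ := hC
      intro hr
      have hq : q ∈ M.sccOf q := ⟨.refl, .refl⟩
      have hmem : q ∈ M.sccOf q ∩ M.acc := ⟨hq, h hq hq⟩
      rw [show M.sccOf q ∩ M.acc = ∅ from hr hq] at hmem
      exact hmem
    simp only [if_neg hn]
    refine ⟨(hA C i).1, fun q hq q' hq' => ?_⟩
    rw [(hA C i).2]
    exact strictOf_pull _ (fun q => M.dual.delta q (w i)) (hA C (i + 1)).1 hq hq'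
end
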